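/- Let d ≥ 3 be an integer. Then there exists a constant C = C(d) > 0 such that for every λ ∈ ℂ∖[−d,d], the operator Δ − λI is boundedly invertible on ℓ²(ℤᵈ) and its matrix elements satisfy |((Δ − λI)⁻¹ δ_{n'})(n)| ≤ C for all n, n' ∈ ℤᵈ. -/

import Mathlib

/-!
Off the real axis, the resolvent is a time integral of the propagator: with the sign `σ = ±1` for
which `e^{-iσtλ}` decays, `(Δ - λ)⁻¹ = -iσ ∫₀^∞ e^{-iσtλ} e^{iσtΔ} dt`. Hence a matrix element of
the resolvent is at most the time integral of that of the propagator, and the point is to bound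
`∫₀^∞ |(e^{±itΔ} δ_{n'})(n)| dt` uniformly in `n` and `n'`.

On the Fourier side `Δ` is multiplication by `∑ cos θⱼ`, so the matrix element of the propagator is
the product over `j` of the one-dimensional kernels `kern (±t) (nⱼ - n'ⱼ)`, which are Bessel
functions `J_m(t)` up to phase (`exp_apply_single`). All of them are at most `1`; as `d ≥ 3`, three
of them can be kept, and their product is at most the sum of their cubes. The classical estimates
`|J_m(t)| ≲ t^{-1/3}` for all `m`, `t^{-1/2}` for `|m| ≤ t/2` and `1/|m|` for `t ≤ |m|/2`, each
obtained from one integration by parts (`norm_integral_phase_le_of_le_deriv`, `norm_osc_le`), show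
that `|J_m(t)|³` is dominated by an explicit function of `t` whose integral over `[0, ∞)` is
bounded independently of `m` (`norm_osc_pow_three_le`, `majorantPrim_sub_le`). The contribution
`∫ t^{-1} dt` of the transition region `t/2 ≤ |m| ≤ 2t` is finite, uniformly in `m`, since `∫ dt/t`
over `[|m|/2, 2|m|]` is `log 4`.

Invertibility outside `[-d, d]` holds because `Δ` is self-adjoint with `‖Δ‖ ≤ d`, and the bound at
the real points outside `[-d, d]` follows from the bound at `λ + iε` by continuity of inversion.
-/

open MeasureTheory

/-- `L` is the discrete Laplacian on `ℓ²(ℤᵈ)`: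
`(Lf)(n) = (1/2)∑_{j=1}^d (f(n+eⱼ) + f(n-eⱼ))`. -/
def IsDiscreteLaplacian (d : ℕ)
    (L : lp (fun _ : Fin d → ℤ => ℂ) 2 →L[ℂ] lp (fun _ : Fin d → ℤ => ℂ) 2) : Prop :=
  ∀ (f : lp (fun _ : Fin d → ℤ => ℂ) 2) (n : Fin d → ℤ),
    L f n = (1 / 2) * ∑ j : Fin d, (f (n + Pi.single j 1) + f (n - Pi.single j 1))

/-! ### Oscillatory integrals over a half-period -/

/-- The oscillating factor `exp (i (t cos x + m x))`, with a real frequency `m`. -/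
noncomputable def phase (t m x : ℝ) : ℂ :=
  Complex.exp (Complex.I * ((t * Real.cos x + m * x : ℝ) : ℂ))

lemma continuous_phase (t m : ℝ) : Continuous (phase t m) := by
  unfold phase; fun_prop

lemma norm_phase (t m x : ℝ) : ‖phase t m x‖ = 1 := by
  unfold phase
  rw [mul_comm, Complex.norm_exp_ofReal_mul_I]

lemma hasDerivAt_phase (t m x : ℝ) :
    HasDerivAt (phase t m) (Complex.I * ((m - t * Real.sin x : ℝ) : ℂ) * phase t m x) x := by
  have h : HasDerivAt (fun x : ℝ => t * Real.cos x + m * x) (m - t * Real.sin x) x := by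
    convert! ((Real.hasDerivAt_cos x).const_mul t).add ((hasDerivAt_id x).const_mul m) using 1
    ring
  have h2 := ((h.ofReal_comp).const_mul Complex.I).cexp
  convert! h2 using 1
  unfold phase; ring

/-- The first-derivative estimate for oscillatory integrals: if the derivative `m - t sin x` of the
phase is at least `μ` in absolute value, the integral is `O(1/μ)`, whatever the length of the
interval. The interval lies in `[-π/2, π/2]`, where `sin` is monotone, so that the remainder of the
integration by parts is the increment of `1 / (m - t sin x)`. -/
lemma norm_integral_phase_le_of_le_deriv {t m a b μ : ℝ} (ht : 0 ≤ t) (ha : -(Real.pi / 2) ≤ a)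
    (hb : b ≤ Real.pi / 2) (hab : a ≤ b) (hμ : 0 < μ)
    (h : ∀ x ∈ Set.Icc a b, μ ≤ |m - t * Real.sin x|) :
    ‖∫ x in a..b, phase t m x‖ ≤ 4 / μ := by
  set p : ℝ → ℝ := fun x => m - t * Real.sin x with hp
  have hp0 : ∀ x ∈ Set.Icc a b, p x ≠ 0 := fun x hx h0 => by
    have := h x hx
    rw [show m - t * Real.sin x = 0 from h0, abs_zero] at this
    linarith
  have hinv : ∀ x ∈ Set.Icc a b, |(p x)⁻¹| ≤ 1 / μ := fun x hx => by
    rw [abs_inv, inv_eq_one_div]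
    exact one_div_le_one_div_of_le hμ (h x hx)
  have hpd : ∀ x, HasDerivAt p (-(t * Real.cos x)) x := fun x => by
    simpa using ((Real.hasDerivAt_sin x).const_mul t).const_sub m
  have hpi : ∀ x ∈ Set.Icc a b, HasDerivAt (fun y => (p y)⁻¹) (t * Real.cos x / p x ^ 2) x :=
    fun x hx => by simpa using (hpd x).fun_inv (hp0 x hx)
  -- boundary term `H` of the integration by parts
  set H : ℝ → ℂ := fun x => -Complex.I * phase t m x * (((p x)⁻¹ : ℝ) : ℂ) with hH
  have hHn : ∀ x ∈ Set.Icc a b, ‖H x‖ ≤ 1 / μ := fun x hx => by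
    have := hinv x hx
    simp only [hH, norm_mul, norm_neg, Complex.norm_I, norm_phase, one_mul, Complex.norm_real]
    exact this
  have hHd : ∀ x ∈ Set.Icc a b, HasDerivAt H
      (phase t m x - Complex.I * phase t m x * ((t * Real.cos x / p x ^ 2 : ℝ) : ℂ)) x := by
    intro x hx
    convert! ((hasDerivAt_phase t m x).const_mul (-Complex.I)).mul (hpi x hx).ofReal_comp using 1
    have : (p x : ℂ) ≠ 0 := by exact_mod_cast hp0 x hx
    have e : ((m - t * Real.sin x : ℝ) : ℂ) = (p x : ℂ) := rfl
    rw [e, Complex.ofReal_inv]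
    have e2 : -Complex.I * (Complex.I * (p x : ℂ) * phase t m x) * (p x : ℂ)⁻¹ =
        -(Complex.I * Complex.I) * ((p x : ℂ) * (p x : ℂ)⁻¹) * phase t m x := by ring
    rw [e2, Complex.I_mul_I, mul_inv_cancel₀ this]
    ring
  have hid : ∀ x, HasDerivAt (fun y => ∫ z in a..y, phase t m z) (phase t m x) x := fun x =>
    ((continuous_phase t m).integral_hasStrictDerivAt a x).hasDerivAt
  -- The remainder, as a function of the upper limit, is dominated by the increment of `1 / p`:
  -- `1 / p` is nondecreasing because `cos ≥ 0`.
  have key := image_norm_le_of_norm_deriv_right_le_deriv_boundary' (a := a) (b := b)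
    (f := fun y => (∫ z in a..y, phase t m z) - H y + H a)
    (f' := fun x => Complex.I * phase t m x * ((t * Real.cos x / p x ^ 2 : ℝ) : ℂ))
    (B := fun y => (p y)⁻¹ - (p a)⁻¹) (B' := fun x => t * Real.cos x / p x ^ 2)
    (fun x hx => ((((hid x).sub (hHd x hx)).add_const (H a)).continuousAt).continuousWithinAt)
    (fun x hx => by
      have hx' : x ∈ Set.Icc a b := ⟨hx.1, hx.2.le⟩
      have := (((hid x).sub (hHd x hx')).add_const (H a)).hasDerivWithinAt (s := Set.Ici x)
      convert! this using 1
      ring)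
    (by simp)
    (fun x hx => ((hpi x hx).sub_const ((p a)⁻¹)).continuousAt.continuousWithinAt)
    (fun x hx => ((hpi x ⟨hx.1, hx.2.le⟩).sub_const ((p a)⁻¹)).hasDerivWithinAt)
    (fun x hx => by
      have hc : 0 ≤ Real.cos x :=
        Real.cos_nonneg_of_neg_pi_div_two_le_of_le (ha.trans hx.1) (hx.2.le.trans hb)
      simp only [norm_mul, Complex.norm_I, norm_phase, one_mul, Complex.norm_real]
      rw [Real.norm_of_nonneg (by positivity)])
    (Set.right_mem_Icc.2 hab)
  have ea := Set.left_mem_Icc.2 hab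
  have eb := Set.right_mem_Icc.2 hab
  have h1 : (∫ z in a..b, phase t m z) =
      ((∫ z in a..b, phase t m z) - H b + H a) + H b - H a := by ring
  have h2 := norm_sub_le (((∫ z in a..b, phase t m z) - H b + H a) + H b) (H a)
  have h3 := norm_add_le ((∫ z in a..b, phase t m z) - H b + H a) (H b)
  rw [← h1] at h2
  have i1 := abs_le.1 (hinv a ea)
  have i2 := abs_le.1 (hinv b eb)
  have i3 := hHn a ea
  have i4 := hHn b eb
  have : 4 / μ = 4 * (1 / μ) := by ring
  linarith [i1.1, i2.2]

/-- `sin ∘ arcsin` is the clamp to `[-1, 1]`, hence does not increase distances, also outside the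
domain of `arcsin`. -/
lemma sin_arcsin_sub_le {x y : ℝ} (hxy : x ≤ y) :
    Real.sin (Real.arcsin y) - Real.sin (Real.arcsin x) ≤ y - x := by
  have hcl : ∀ z : ℝ, Real.sin (Real.arcsin z) = max (-1) (min 1 z) := fun z => by
    rcases le_total z (-1) with h | h
    · rw [Real.arcsin_of_le_neg_one h, Real.sin_neg, Real.sin_pi_div_two, min_eq_right (by linarith),
        max_eq_left h]
    rcases le_total z 1 with h' | h'
    · rw [Real.sin_arcsin h h', min_eq_right h', max_eq_right h]
    · rw [Real.arcsin_of_one_le h', Real.sin_pi_div_two, min_eq_left h', max_eq_right (by norm_num)]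
  rw [hcl, hcl]
  grind

/-- The set where the derivative of the phase is smaller than `μ` is the interval between the two
`arcsin` values, where the integrand is bounded by `1`; the first-derivative estimate applies on
either side of it. The endpoints are meaningful for every `m`, since `arcsin` is constant outside
`[-1, 1]`. -/
lemma norm_osc_le {t m μ : ℝ} (ht : 0 < t) (hμ : 0 < μ) :
    ‖∫ x in (-(Real.pi / 2))..(Real.pi / 2), phase t m x‖ ≤
      (Real.arcsin ((m + μ) / t) - Real.arcsin ((m - μ) / t)) + 8 / μ := by
  set α := Real.arcsin ((m - μ) / t) with hα
  set β := Real.arcsin ((m + μ) / t) with hβ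
  have hαβ : α ≤ β := Real.monotone_arcsin (by gcongr; linarith)
  have a1 : -(Real.pi / 2) ≤ α := Real.neg_pi_div_two_le_arcsin _
  have a2 : α ≤ Real.pi / 2 := Real.arcsin_le_pi_div_two _
  have b1 : -(Real.pi / 2) ≤ β := Real.neg_pi_div_two_le_arcsin _
  have b2 : β ≤ Real.pi / 2 := Real.arcsin_le_pi_div_two _
  have hi : ∀ a b, IntervalIntegrable (phase t m) volume a b := fun a b =>
    (continuous_phase t m).intervalIntegrable a b
  rw [← intervalIntegral.integral_add_adjacent_intervals (hi _ α) (hi α _),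
    ← intervalIntegral.integral_add_adjacent_intervals (hi α β) (hi β _)]
  have h2 : ‖∫ x in α..β, phase t m x‖ ≤ β - α := by
    have := intervalIntegral.norm_integral_le_of_norm_le_const (a := α) (b := β) (C := 1)
      (f := phase t m) (fun x _ => (norm_phase t m x).le)
    rwa [one_mul, abs_of_nonneg (by linarith)] at this
  have h1 : ‖∫ x in (-(Real.pi / 2))..α, phase t m x‖ ≤ 4 / μ := by
    rcases a1.eq_or_lt with e | e
    · rw [← e, intervalIntegral.integral_same, norm_zero]; positivity
    refine norm_integral_phase_le_of_le_deriv ht.le le_rfl a2 a1 hμ fun x hx => ?_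
    have : Real.sin α ≤ (m - μ) / t := (Real.le_arcsin_iff_sin_le' ⟨e, a2⟩).1 le_rfl
    have hs : Real.sin x ≤ Real.sin α := Real.sin_le_sin_of_le_of_le_pi_div_two hx.1 a2 hx.2
    have := (le_div_iff₀ ht).1 (hs.trans this)
    exact le_trans (by linarith) (le_abs_self _)
  have h3 : ‖∫ x in β..(Real.pi / 2), phase t m x‖ ≤ 4 / μ := by
    rcases b2.eq_or_lt with e | e
    · rw [e, intervalIntegral.integral_same, norm_zero]; positivity
    refine norm_integral_phase_le_of_le_deriv ht.le b1 le_rfl b2 hμ fun x hx => ?_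
    have : (m + μ) / t ≤ Real.sin β := (Real.arcsin_le_iff_le_sin' ⟨b1, e⟩).1 le_rfl
    have hs : Real.sin β ≤ Real.sin x := Real.sin_le_sin_of_le_of_le_pi_div_two b1 hx.2 hx.1
    have := (div_le_iff₀ ht).1 (this.trans hs)
    exact le_trans (by linarith) (neg_le_abs _)
  have e8 : 8 / μ = 4 / μ + 4 / μ := by ring
  have n1 := norm_add_le (∫ x in (-(Real.pi / 2))..α, phase t m x)
    ((∫ x in α..β, phase t m x) + ∫ x in β..(Real.pi / 2), phase t m x)
  have n2 := norm_add_le (∫ x in α..β, phase t m x) (∫ x in β..(Real.pi / 2), phase t m x)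
  linarith

/-- `arcsin` is Hölder continuous of exponent `1/2`, here for the increment `2 / s ^ 2`. -/
lemma arcsin_sub_le_of_sub_le {x y s : ℝ} (hxy : x ≤ y) (hs : 0 < s) (h : y - x ≤ 2 / s ^ 2) :
    Real.arcsin y - Real.arcsin x ≤ Real.pi / s := by
  have hpi := Real.pi_pos
  set α := Real.arcsin x with hα
  set β := Real.arcsin y with hβ
  have hαβ : α ≤ β := Real.monotone_arcsin hxy
  have a1 : -(Real.pi / 2) ≤ α := Real.neg_pi_div_two_le_arcsin _
  have b2 : β ≤ Real.pi / 2 := Real.arcsin_le_pi_div_two _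
  have h0 := sin_arcsin_sub_le hxy
  rw [← hα, ← hβ, Real.sin_sub_sin] at h0
  have h1 : 2 / Real.pi * ((β - α) / 2) ≤ Real.sin ((β - α) / 2) :=
    Real.mul_le_sin (by linarith) (by linarith)
  have h2 : Real.sin ((β - α) / 2) ≤ Real.cos ((β + α) / 2) := by
    rw [← Real.cos_pi_div_two_sub, ← Real.cos_abs ((β + α) / 2)]
    refine Real.cos_le_cos_of_nonneg_of_le_pi (abs_nonneg _) (by linarith) ?_
    rw [abs_le]; constructor <;> linarith
  have e : 2 / Real.pi * ((β - α) / 2) = (β - α) / Real.pi := by field_simp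
  rw [e] at h1
  have h3 : 0 ≤ (β - α) / Real.pi := div_nonneg (by linarith) hpi.le
  have h4 : ((β - α) / Real.pi) ^ 2 ≤ (1 / s) ^ 2 := by
    have : 2 / s ^ 2 = 2 * (1 / s) ^ 2 := by field_simp
    nlinarith
  have h5 := (pow_le_pow_iff_left₀ h3 (by positivity) two_ne_zero).1 h4
  rw [div_le_iff₀ hpi] at h5
  calc β - α ≤ 1 / s * Real.pi := h5
    _ = Real.pi / s := by ring

/-- Away from `±1`, `arcsin` is Lipschitz. -/
lemma arcsin_sub_le_of_abs_le {x y : ℝ} (hxy : x ≤ y) (hx : -(3 / 4) ≤ x) (hy : y ≤ 3 / 4) :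
    Real.arcsin y - Real.arcsin x ≤ Real.pi * (y - x) := by
  have hpi := Real.pi_pos
  set α := Real.arcsin x with hα
  set β := Real.arcsin y with hβ
  have hαβ : α ≤ β := Real.monotone_arcsin hxy
  have a1 : -(Real.pi / 2) ≤ α := Real.neg_pi_div_two_le_arcsin _
  have b2 : β ≤ Real.pi / 2 := Real.arcsin_le_pi_div_two _
  have h0 := sin_arcsin_sub_le hxy
  rw [← hα, ← hβ, Real.sin_sub_sin] at h0
  have h1 : 2 / Real.pi * ((β - α) / 2) ≤ Real.sin ((β - α) / 2) :=
    Real.mul_le_sin (by linarith) (by linarith)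
  have s1 : Real.sin ((β + α) / 2) ≤ 3 / 4 := by
    refine le_trans (Real.sin_le_sin_of_le_of_le_pi_div_two (by linarith) b2 (by linarith)) ?_
    rw [hβ, Real.sin_arcsin (by linarith) (by linarith)]; exact hy
  have s2 : -(3 / 4) ≤ Real.sin ((β + α) / 2) := by
    refine le_trans ?_ (Real.sin_le_sin_of_le_of_le_pi_div_two (x := α) a1 (by linarith)
      (by linarith))
    rw [hα, Real.sin_arcsin (by linarith) (by linarith)]; exact hx
  have hc0 : 0 ≤ Real.cos ((β + α) / 2) :=
    Real.cos_nonneg_of_neg_pi_div_two_le_of_le (by linarith) (by linarith)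
  have hc : 1 / 2 ≤ Real.cos ((β + α) / 2) := by
    have := Real.sin_sq_add_cos_sq ((β + α) / 2)
    nlinarith
  have e : 2 / Real.pi * ((β - α) / 2) = (β - α) / Real.pi := by field_simp
  rw [e] at h1
  have h3 : 0 ≤ (β - α) / Real.pi := div_nonneg (by linarith) hpi.le
  have h4 : (β - α) / Real.pi ≤ y - x := by nlinarith
  rw [div_le_iff₀ hpi] at h4
  linarith

/-- The integral of the oscillating factor over the half-period `[-π/2, π/2]`, on which the
derivative `m - t sin x` of the phase is monotone. -/
noncomputable def osc (t m : ℝ) : ℂ := ∫ x in (-(Real.pi / 2))..(Real.pi / 2), phase t m x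

lemma norm_osc_le_pi (t m : ℝ) : ‖osc t m‖ ≤ Real.pi := by
  have := intervalIntegral.norm_integral_le_of_norm_le_const (a := -(Real.pi / 2))
    (b := Real.pi / 2) (C := 1) (f := phase t m) (fun x _ => (norm_phase t m x).le)
  rw [one_mul, show Real.pi / 2 - -(Real.pi / 2) = Real.pi by ring,
    abs_of_pos Real.pi_pos] at this
  exact this

/-- Reversing the signs of `t` and `m` conjugates the integral. -/
lemma norm_osc_neg (t m : ℝ) : ‖osc (-t) (-m)‖ = ‖osc t m‖ := by
  have : osc (-t) (-m) = (starRingEnd ℂ) (osc t m) := by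
    unfold osc
    rw [← intervalIntegral.intervalIntegral_conj]
    congr 1; ext x
    unfold phase
    rw [← Complex.exp_conj]
    congr 1
    simp only [map_mul, Complex.conj_I, Complex.conj_ofReal]
    push_cast; ring
  rw [this, RCLike.norm_conj]

/-- The uniform decay `t^{-1/3}` (degenerate stationary points, when `|m|` is close to `t`), from
the choice `μ = t^{1/3}`. -/
lemma norm_osc_pow_three_le_inv {t m : ℝ} (ht : 0 < t) : ‖osc t m‖ ^ 3 ≤ 12 ^ 3 / t := by
  have hpi := Real.pi_lt_four
  obtain ⟨s, hs, rfl⟩ : ∃ s : ℝ, 0 < s ∧ s ^ 3 = t := ⟨t ^ (1 / 3 : ℝ), by positivity, by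
    rw [← Real.rpow_natCast, ← Real.rpow_mul ht.le]; norm_num⟩
  have h1 := norm_osc_le (m := m) ht hs
  have h2 := arcsin_sub_le_of_sub_le (x := (m - s) / s ^ 3) (y := (m + s) / s ^ 3) (s := s)
    (by gcongr; linarith) hs (le_of_eq (by field_simp; ring))
  have h3 : ‖osc (s ^ 3) m‖ ≤ 12 / s := by
    have : Real.pi / s ≤ 4 / s := by gcongr
    have e : 12 / s = 4 / s + 8 / s := by ring
    unfold osc; linarith
  calc ‖osc (s ^ 3) m‖ ^ 3 ≤ (12 / s) ^ 3 := by gcongr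
    _ = 12 ^ 3 / s ^ 3 := by rw [div_pow]

/-- The decay `t^{-1/2}` when the stationary point is nondegenerate, from the choice
`μ = √t / 4`. -/
lemma norm_osc_le_of_two_mul_le {t m : ℝ} (ht : 1 ≤ t) (hm : 2 * |m| ≤ t) :
    ‖osc t m‖ ≤ 34 / √t := by
  have hpi := Real.pi_lt_four
  have hs1 : 1 ≤ √t := Real.one_le_sqrt.2 ht
  have hss : √t * √t = t := Real.mul_self_sqrt (by linarith)
  set s := √t
  have h1 := norm_osc_le (t := t) (m := m) (μ := s / 4) (by linarith) (by linarith)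
  have hm' := abs_le.1 (show |m| ≤ t / 2 by linarith)
  have hst : s / 4 ≤ t / 4 := by nlinarith
  have h2 := arcsin_sub_le_of_abs_le (x := (m - s / 4) / t) (y := (m + s / 4) / t)
    (by gcongr; linarith)
    (by rw [le_div_iff₀ (by linarith)]; linarith [hm'.1])
    (by rw [div_le_iff₀ (by linarith)]; linarith [hm'.2])
  have e1 : (m + s / 4) / t - (m - s / 4) / t = 1 / 2 * (1 / s) := by
    rw [← hss]; field_simp; ring
  rw [e1] at h2
  have e2 : 8 / (s / 4) = 32 * (1 / s) := by field_simp; norm_num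
  have e3 : 34 / s = 34 * (1 / s) := by ring
  have : 0 < 1 / s := by positivity
  rw [e2] at h1
  rw [e3]
  unfold osc
  nlinarith

/-- When `t ≤ |m| / 2` the phase has no stationary point. -/
lemma norm_osc_le_of_two_mul_le_abs {t m : ℝ} (ht : 0 ≤ t) (hm0 : m ≠ 0) (hm : 2 * t ≤ |m|) :
    ‖osc t m‖ ≤ 8 / |m| := by
  have hm' := abs_pos.2 hm0
  have := norm_integral_phase_le_of_le_deriv (m := m) (μ := |m| / 2) ht le_rfl le_rfl
    (by linarith [Real.pi_pos]) (by linarith) (fun x _ => by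
      have h1 := abs_sub_abs_le_abs_sub m (t * Real.sin x)
      have h2 : |t * Real.sin x| ≤ t := by
        rw [abs_mul, abs_of_nonneg ht]
        exact mul_le_of_le_one_right ht (Real.abs_sin_le_one x)
      linarith)
  refine this.trans (le_of_eq ?_)
  field_simp; norm_num

/-- Up to a constant, an integrable majorant on `t ≥ 0` of the cube of the one-dimensional kernel.
The first term accounts for `t ≤ 1` and for `t ≥ 2|m|`; the second, of size `1/|m|` for `t ≲ |m|`,
for the rest. At `m = 0` the convention `0⁻¹ = 0` removes the second term. -/
noncomputable def majorant (m t : ℝ) : ℝ :=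
  1 / ((1 + t) * √(1 + t)) + |m|⁻¹ / (1 + (t * |m|⁻¹) ^ 2)

/-- Each of the bounds on `osc` is used in its own range of `t` relative to `|m|`. The frequency
has to be an integer so that `|m| ≥ 1` as soon as `m ≠ 0`. -/
lemma norm_osc_pow_three_le (m : ℤ) {t : ℝ} (ht : 0 ≤ t) :
    ‖osc t m‖ ^ 3 ≤ 200000 * majorant m t := by
  have hA : 0 ≤ 1 / ((1 + t) * √(1 + t)) := by positivity
  have hB : 0 ≤ |(m : ℝ)|⁻¹ / (1 + (t * |(m : ℝ)|⁻¹) ^ 2) := by positivity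
  unfold majorant
  have hpi := Real.pi_lt_four
  rcases le_total t 1 with h1 | h1
  · have h2 : ‖osc t m‖ ^ 3 ≤ 4 ^ 3 := by
      gcongr; exact (norm_osc_le_pi t m).trans hpi.le
    have h3 : √(1 + t) ≤ 2 := by
      rw [Real.sqrt_le_left (by norm_num)]; linarith
    have h4 : 1 / 4 ≤ 1 / ((1 + t) * √(1 + t)) := by
      apply one_div_le_one_div_of_le (by positivity)
      nlinarith [Real.sqrt_nonneg (1 + t)]
    linarith
  have htp : 0 < t := by linarith
  rcases le_total (2 * |(m : ℝ)|) t with h2 | h2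
  · have h3 := norm_osc_le_of_two_mul_le h1 h2
    have h4 : ‖osc t m‖ ^ 3 ≤ (34 / √t) ^ 3 := by gcongr
    have h5 : √(1 + t) ≤ 2 * √t := by
      rw [Real.sqrt_le_left (by positivity), mul_pow, Real.sq_sqrt htp.le]; linarith
    have hs : 0 < √t := Real.sqrt_pos.2 htp
    have h6 : 1 / (4 * (t * √t)) ≤ 1 / ((1 + t) * √(1 + t)) := by
      apply one_div_le_one_div_of_le (by positivity)
      calc (1 + t) * √(1 + t) ≤ (2 * t) * (2 * √t) := by gcongr; linarith
        _ = _ := by ring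
    have h7 : (34 / √t) ^ 3 = 34 ^ 3 * 4 * (1 / (4 * (t * √t))) := by
      have : √t ^ 3 = t * √t := by rw [pow_succ, Real.sq_sqrt htp.le]
      rw [div_pow, this]; field_simp
    have h8 : 0 ≤ 1 / (4 * (t * √t)) := by positivity
    rw [h7] at h4
    nlinarith
  · have hm0 : m ≠ 0 := by
      rintro rfl
      simp at h2; linarith
    have hm1 : 1 ≤ |(m : ℝ)| := by exact_mod_cast Int.one_le_abs hm0
    set M := |(m : ℝ)| with hM
    have hMi : 0 < M⁻¹ := by positivity
    have hMM : M * M⁻¹ = 1 := mul_inv_cancel₀ (by positivity)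
    have h3 : M⁻¹ / 5 ≤ M⁻¹ / (1 + (t * M⁻¹) ^ 2) := by
      apply div_le_div_of_nonneg_left hMi.le (by positivity)
      have : t * M⁻¹ ≤ 2 := by
        calc t * M⁻¹ ≤ 2 * M * M⁻¹ := by gcongr
          _ = 2 := by rw [mul_assoc, hMM, mul_one]
      have h0 : 0 ≤ t * M⁻¹ := by positivity
      nlinarith
    rcases le_total (2 * t) M with h4 | h4
    · have h5 := norm_osc_le_of_two_mul_le_abs ht (by exact_mod_cast hm0) h4
      have h6 : ‖osc t m‖ ^ 3 ≤ (8 / M) ^ 3 := by gcongr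
      have h7 : (8 / M) ^ 3 ≤ 8 ^ 3 * M⁻¹ := by
        rw [div_pow, div_eq_mul_inv]
        gcongr
        exact le_self_pow₀ hm1 (by norm_num)
      linarith
    · have h5 := norm_osc_pow_three_le_inv (m := m) htp
      have h6 : 12 ^ 3 / t ≤ 12 ^ 3 * 2 * M⁻¹ := by
        rw [div_le_iff₀ htp]
        nlinarith
      linarith

/-! ### The one-dimensional kernel -/

/-- Normalised Lebesgue measure on one period. The period starts at `-π/2`, so that it splits at
`π/2` into two half-periods on each of which `sin` is monotone. -/
noncomputable def circ : Measure ℝ :=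
  ProbabilityTheory.cond volume (Set.Ioc (-(Real.pi / 2)) (3 * Real.pi / 2))

instance isProbabilityMeasure_circ : IsProbabilityMeasure circ := by
  apply ProbabilityTheory.cond_isProbabilityMeasure_of_finite
  · rw [Real.volume_Ioc]
    have := Real.pi_pos
    simp; linarith
  · simp

lemma integral_circ (f : ℝ → ℂ) :
    ∫ x, f x ∂circ = (((2 * Real.pi)⁻¹ : ℝ) : ℂ) *
      ∫ x in (-(Real.pi / 2))..(3 * Real.pi / 2), f x := by
  have := Real.pi_pos
  rw [circ, ProbabilityTheory.cond, integral_smul_measure, Real.volume_Ioc,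
    intervalIntegral.integral_of_le (by linarith), ENNReal.toReal_inv,
    ENNReal.toReal_ofReal (by linarith), Complex.real_smul]
  congr 3
  ring

/-- The one-dimensional kernel: up to a power of `i`, the Bessel function `J_m(t)`. -/
noncomputable def kern (t : ℝ) (m : ℤ) : ℂ := ∫ x, phase t m x ∂circ

lemma norm_kern_le_one (t : ℝ) (m : ℤ) : ‖kern t m‖ ≤ 1 := by
  have := norm_integral_le_of_norm_le_const (μ := circ) (f := phase t m) (C := 1)
    (Filter.Eventually.of_forall fun x => (norm_phase t m x).le)
  simpa [kern] using this

lemma kern_zero (m : ℤ) : kern 0 m = if m = 0 then 1 else 0 := by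
  have hpi := Real.pi_pos
  rw [kern, integral_circ]
  split_ifs with h
  · subst h
    have : ∀ x, phase 0 ((0 : ℤ) : ℝ) x = 1 := fun x => by simp [phase]
    simp only [this]
    rw [intervalIntegral.integral_const, Complex.real_smul, mul_one, ← Complex.ofReal_mul,
      ← Complex.ofReal_one]
    congr 1
    field_simp; ring
  · have : ∀ x : ℝ, phase 0 m x = Complex.exp ((Complex.I * m) * x) := fun x => by
      simp [phase, mul_assoc]
    simp only [this]
    rw [integral_exp_mul_complex (by simp [h])]
    have e : (Complex.I * m) * ((3 * Real.pi / 2 : ℝ) : ℂ) =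
        (Complex.I * m) * ((-(Real.pi / 2) : ℝ) : ℂ) + m * (2 * Real.pi * Complex.I) := by
      push_cast; ring
    rw [e, Complex.exp_add, Complex.exp_int_mul_two_pi_mul_I]
    simp

/-- The translation by `π` turns the second half-period into the first, with `t` replaced by `-t`;
conjugation then moves the sign to `m`. -/
lemma norm_kern_le (t : ℝ) (m : ℤ) :
    ‖kern t m‖ ≤ (2 * Real.pi)⁻¹ * (‖osc t m‖ + ‖osc t (-m : ℤ)‖) := by
  have hpi := Real.pi_pos
  have hi : ∀ a b, IntervalIntegrable (phase t m) volume a b := fun a b =>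
    (continuous_phase t m).intervalIntegrable a b
  rw [kern, integral_circ, norm_mul, Complex.norm_real, Real.norm_of_nonneg (by positivity),
    ← intervalIntegral.integral_add_adjacent_intervals (hi _ (Real.pi / 2)) (hi _ _)]
  gcongr
  refine (norm_add_le _ _).trans ?_
  have h2 : ∫ x in (Real.pi / 2)..(3 * Real.pi / 2), phase t m x =
      osc (-t) m * Complex.exp (Complex.I * ((m * Real.pi : ℝ) : ℂ)) := by
    have := intervalIntegral.integral_comp_add_right (a := -(Real.pi / 2)) (b := Real.pi / 2)
      (phase t m) Real.pi
    rw [show -(Real.pi / 2) + Real.pi = Real.pi / 2 by ring,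
      show Real.pi / 2 + Real.pi = 3 * Real.pi / 2 by ring] at this
    rw [← this, osc, ← intervalIntegral.integral_mul_const]
    congr 1; ext x
    unfold phase
    rw [← Complex.exp_add, Real.cos_add_pi]
    congr 1
    push_cast; ring
  have h3 : ‖osc (-t) m‖ = ‖osc t (-m : ℤ)‖ := by
    rw [← norm_osc_neg t]; simp
  rw [h2, norm_mul, h3, mul_comm Complex.I, Complex.norm_exp_ofReal_mul_I, mul_one]
  exact le_rfl

/-- Here `τ = ± t` covers both directions of time: the sign only exchanges the two half-periods. -/
lemma norm_kern_pow_three_le {t τ : ℝ} (ht : 0 ≤ t) (hτ : τ = t ∨ τ = -t) (m : ℤ) :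
    ‖kern τ m‖ ^ 3 ≤ 200000 * majorant m t := by
  have hpi := Real.pi_gt_three
  have h1 := norm_osc_pow_three_le m ht
  have h2 := norm_osc_pow_three_le (-m) ht
  have e : majorant ((-m : ℤ) : ℝ) t = majorant m t := by
    unfold majorant; rw [Int.cast_neg, abs_neg]
  rw [e] at h2
  have hk : ‖kern τ m‖ ≤ (2 * Real.pi)⁻¹ * (‖osc t m‖ + ‖osc t (-m : ℤ)‖) := by
    rcases hτ with rfl | rfl
    · exact norm_kern_le _ m
    · have h3 : ‖osc (-t) m‖ = ‖osc t (-m : ℤ)‖ := by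
        rw [← norm_osc_neg t]; simp
      have h4 : ‖osc (-t) (-m : ℤ)‖ = ‖osc t m‖ := by
        rw [← norm_osc_neg t]; simp
      have := norm_kern_le (-t) m
      rwa [h3, h4, add_comm] at this
  have hM : ‖kern τ m‖ ≤ max ‖osc t m‖ ‖osc t (-m : ℤ)‖ := by
    have h5 : (2 * Real.pi)⁻¹ ≤ 1 / 2 := by
      rw [inv_eq_one_div]; apply one_div_le_one_div_of_le <;> linarith
    have h6 := le_max_left ‖osc t m‖ ‖osc t (-m : ℤ)‖
    have h7 := le_max_right ‖osc t m‖ ‖osc t (-m : ℤ)‖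
    have h8 := norm_nonneg (osc t m)
    have h9 := norm_nonneg (osc t (-m : ℤ))
    nlinarith
  rcases max_choice ‖osc t m‖ ‖osc t (-m : ℤ)‖ with h | h <;> rw [h] at hM
  · exact (pow_le_pow_left₀ (norm_nonneg _) hM 3).trans h1
  · exact (pow_le_pow_left₀ (norm_nonneg _) hM 3).trans h2

/-- An explicit antiderivative of `majorant m`. -/
noncomputable def majorantPrim (m t : ℝ) : ℝ := -2 / √(1 + t) + Real.arctan (t * |m|⁻¹)

lemma hasDerivAt_majorantPrim (m : ℝ) {t : ℝ} (ht : 0 ≤ t) :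
    HasDerivAt (majorantPrim m) (majorant m t) t := by
  have hs : 0 < √(1 + t) := Real.sqrt_pos.2 (by linarith)
  have h1 : HasDerivAt (fun t : ℝ => √(1 + t)) (1 / (2 * √(1 + t))) t :=
    ((hasDerivAt_id t).const_add 1).sqrt (by simp; linarith)
  have h2 := (h1.fun_inv hs.ne').const_mul (-2)
  have h3 := ((hasDerivAt_id t).mul_const (|m|⁻¹)).arctan
  convert! h2.add h3 using 1
  · unfold majorant
    have : √(1 + t) ^ 2 = 1 + t := Real.sq_sqrt (by linarith)
    rw [this]
    simp only [id]
    field_simp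

/-- The integral of `majorant m` over `[0, t]` is bounded uniformly in `m` and `t`. -/
lemma majorantPrim_sub_le (m t : ℝ) :
    majorantPrim m t - majorantPrim m 0 ≤ 4 := by
  have h1 := Real.arctan_lt_pi_div_two (t * |m|⁻¹)
  have h2 : -2 / √(1 + t) ≤ 0 := by
    apply div_nonpos_of_nonpos_of_nonneg <;> norm_num
  have h3 : majorantPrim m 0 = -2 := by simp [majorantPrim]
  rw [h3]; unfold majorantPrim
  linarith [Real.pi_lt_four]

/-- This is where `d ≥ 3` enters: three of the kernels are needed to reach an integrable
majorant, and the others are bounded by `1`. -/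
lemma prod_norm_kern_le {d : ℕ} (hd : 3 ≤ d) {t τ : ℝ} (ht : 0 ≤ t) (hτ : τ = t ∨ τ = -t) :
    ∀ v : Fin d → ℤ, ∏ j, ‖kern τ (v j)‖ ≤ 200000 * (majorant (v ⟨0, by omega⟩) t +
      majorant (v ⟨1, by omega⟩) t + majorant (v ⟨2, by omega⟩) t) := by
  obtain ⟨k, rfl⟩ : ∃ k, d = k + 1 + 1 + 1 := ⟨d - 3, by omega⟩
  intro v
  rw [Fin.prod_univ_succ, Fin.prod_univ_succ, Fin.prod_univ_succ]
  have hr : ∏ i : Fin k, ‖kern τ (v i.succ.succ.succ)‖ ≤ 1 :=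
    Finset.prod_le_one (fun _ _ => norm_nonneg _) (fun _ _ => norm_kern_le_one _ _)
  have hr0 : 0 ≤ ∏ i : Fin k, ‖kern τ (v i.succ.succ.succ)‖ :=
    Finset.prod_nonneg (fun _ _ => norm_nonneg _)
  have c0 := norm_kern_pow_three_le ht hτ (v ⟨0, by omega⟩)
  have c1 := norm_kern_pow_three_le ht hτ (v ⟨1, by omega⟩)
  have c2 := norm_kern_pow_three_le ht hτ (v ⟨2, by omega⟩)
  have e0 : (0 : Fin (k + 1 + 1 + 1)) = ⟨0, by omega⟩ := rfl
  have e1 : (0 : Fin (k + 1 + 1)).succ = ⟨1, by omega⟩ := rfl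
  have e2 : (0 : Fin (k + 1)).succ.succ = ⟨2, by omega⟩ := rfl
  rw [e0, e1, e2]
  have n0 := norm_nonneg (kern τ (v ⟨0, by omega⟩))
  have n1 := norm_nonneg (kern τ (v ⟨1, by omega⟩))
  have n2 := norm_nonneg (kern τ (v ⟨2, by omega⟩))
  set a := ‖kern τ (v ⟨0, by omega⟩)‖
  set b := ‖kern τ (v ⟨1, by omega⟩)‖
  set c := ‖kern τ (v ⟨2, by omega⟩)‖
  have hab : 0 ≤ a * b * c := by positivity
  have amgm : a * b * c ≤ a ^ 3 + b ^ 3 + c ^ 3 := by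
    nlinarith [mul_nonneg (add_nonneg (add_nonneg n0 n1) n2)
      (add_nonneg (add_nonneg (sq_nonneg (a - b)) (sq_nonneg (b - c))) (sq_nonneg (c - a)))]
  calc _ = (a * b * c) * ∏ i : Fin k, ‖kern τ (v i.succ.succ.succ)‖ := by ring
    _ ≤ a * b * c := mul_le_of_le_one_right hab hr
    _ ≤ _ := by linarith

/-! ### The Laplacian, its Fourier representation and its spectrum -/

/-- The character `θ ↦ exp (i ∑ vⱼ θⱼ)` of the torus. -/
noncomputable def torusChar {d : ℕ} (v : Fin d → ℤ) (θ : Fin d → ℝ) : ℂ :=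
  Complex.exp (Complex.I * ((∑ j, (v j : ℝ) * θ j : ℝ) : ℂ))

/-- The Fourier symbol of the Laplacian. -/
noncomputable def symb {d : ℕ} (θ : Fin d → ℝ) : ℝ := ∑ j, Real.cos (θ j)

/-- The normalised measure on the `d`-dimensional torus. -/
noncomputable def torus (d : ℕ) : Measure (Fin d → ℝ) := Measure.pi fun _ => circ

instance isProbabilityMeasure_torus (d : ℕ) : IsProbabilityMeasure (torus d) := by
  unfold torus; infer_instance

lemma continuous_torusChar {d : ℕ} (v : Fin d → ℤ) : Continuous (torusChar v) := by
  unfold torusChar; fun_prop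

lemma continuous_symb {d : ℕ} : Continuous (symb (d := d)) := by
  unfold symb; fun_prop

lemma norm_torusChar {d : ℕ} (v : Fin d → ℤ) (θ : Fin d → ℝ) : ‖torusChar v θ‖ = 1 := by
  unfold torusChar
  rw [mul_comm, Complex.norm_exp_ofReal_mul_I]

lemma abs_symb_le {d : ℕ} (θ : Fin d → ℝ) : |symb θ| ≤ d := by
  unfold symb
  refine (Finset.abs_sum_le_sum_abs _ _).trans ?_
  refine (Finset.sum_le_sum fun j _ => Real.abs_cos_le_one (θ j)).trans ?_
  simp

/-- Translating the frequency by `± eⱼ` and averaging multiplies a character by `cos θⱼ`. -/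
lemma torusChar_add_single {d : ℕ} (v : Fin d → ℤ) (j : Fin d) (θ : Fin d → ℝ) :
    torusChar (v + Pi.single j 1) θ + torusChar (v - Pi.single j 1) θ =
      2 * (Real.cos (θ j) : ℂ) * torusChar v θ := by
  have h : ∑ i, ((Pi.single j 1 : Fin d → ℤ) i : ℝ) * θ i = θ j := by
    rw [Finset.sum_eq_single j]
    · simp
    · intro i _ hi; simp [Pi.single_eq_of_ne hi]
    · simp
  have h1 : ∑ i, ((v + Pi.single j 1 : Fin d → ℤ) i : ℝ) * θ i = ∑ i, (v i : ℝ) * θ i + θ j := by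
    rw [← h, ← Finset.sum_add_distrib]
    congr 1; ext i; rw [Pi.add_apply]; push_cast; ring
  have h2 : ∑ i, ((v - Pi.single j 1 : Fin d → ℤ) i : ℝ) * θ i = ∑ i, (v i : ℝ) * θ i - θ j := by
    rw [← h, ← Finset.sum_sub_distrib]
    congr 1; ext i; rw [Pi.sub_apply]; push_cast; ring
  unfold torusChar
  rw [h1, h2, Complex.ofReal_cos, Complex.cos, Complex.ofReal_add, Complex.ofReal_sub, mul_add,
    mul_sub, sub_eq_add_neg, Complex.exp_add, Complex.exp_add]
  ring_nf

/-- Separation of variables for the Fourier integral of `exp (i τ ∑ cos θⱼ)`. -/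
lemma integral_exp_symb {d : ℕ} (τ : ℝ) (v : Fin d → ℤ) :
    ∫ θ, Complex.exp ((Complex.I * τ) * (symb θ : ℂ)) * torusChar v θ ∂(torus d) =
      ∏ j, kern τ (v j) := by
  unfold kern torus
  rw [← integral_fintype_prod_eq_prod (𝕜 := ℂ) (fun j x => phase τ (v j) x)]
  congr 1; ext θ
  unfold phase torusChar symb
  rw [← Complex.exp_sum, ← Complex.exp_add, ← Finset.mul_sum, mul_assoc, ← mul_add]
  congr 2
  push_cast
  rw [Finset.mul_sum, ← Finset.sum_add_distrib]

lemma integrable_torus {d : ℕ} {f : (Fin d → ℝ) → ℂ} (hf : Continuous f) (C : ℝ)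
    (h : ∀ θ, ‖f θ‖ ≤ C) : Integrable f (torus d) :=
  Integrable.of_bound hf.aestronglyMeasurable C (Filter.Eventually.of_forall h)

lemma norm_symb_pow_mul_le {d : ℕ} (k : ℕ) (v : Fin d → ℤ) (θ : Fin d → ℝ) :
    ‖(symb θ : ℂ) ^ k * torusChar v θ‖ ≤ (d : ℝ) ^ k := by
  rw [norm_mul, norm_pow, norm_torusChar, mul_one, Complex.norm_real, Real.norm_eq_abs]
  exact pow_le_pow_left₀ (abs_nonneg _) (abs_symb_le θ) k

lemma continuous_symb_pow_mul {d : ℕ} (k : ℕ) (v : Fin d → ℤ) :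
    Continuous fun θ : Fin d → ℝ => (symb θ : ℂ) ^ k * torusChar v θ :=
  ((Complex.continuous_ofReal.comp continuous_symb).pow k).mul (continuous_torusChar v)

/-- The Hilbert space `ℓ²(ℤᵈ)`. -/
noncomputable abbrev latticeL2 (d : ℕ) := lp (fun _ : Fin d → ℤ => ℂ) 2

/-- Fourier representation of the matrix elements of the powers of the Laplacian. -/
lemma pow_apply_single {d : ℕ} {L : latticeL2 d →L[ℂ] latticeL2 d}
    (hL : IsDiscreteLaplacian d L) (k : ℕ) (n' : Fin d → ℤ) : ∀ n : Fin d → ℤ,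
    (L ^ k) (lp.single 2 n' (1 : ℂ)) n =
      ∫ θ, (symb θ : ℂ) ^ k * torusChar (n - n') θ ∂(torus d) := by
  induction k with
  | zero =>
    intro n
    have h := integral_exp_symb 0 (n - n')
    simp only [Complex.ofReal_zero, mul_zero, zero_mul, Complex.exp_zero, one_mul] at h
    simp only [pow_zero, one_mul, h, kern_zero, lp.single_apply, one_apply_eq_self]
    rw [Finset.prod_ite_zero]
    simp only [Pi.single_apply, funext_iff, Finset.mem_univ, true_implies, Pi.sub_apply,
      sub_eq_zero, Finset.prod_const_one]
  | succ k ih =>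
    intro n
    have hint : ∀ v : Fin d → ℤ,
        Integrable (fun θ => (symb θ : ℂ) ^ k * torusChar v θ) (torus d) := fun v =>
      integrable_torus (continuous_symb_pow_mul k v) _ (norm_symb_pow_mul_le k v)
    rw [pow_succ', mul_apply_eq_comp, hL]
    simp only [ih]
    have e1 : ∀ j, n + Pi.single j 1 - n' = (n - n') + Pi.single j 1 := fun j => by abel
    have e2 : ∀ j, n - Pi.single j 1 - n' = (n - n') - Pi.single j 1 := fun j => by abel
    simp only [e1, e2]
    have hadd : ∀ j ∈ (Finset.univ : Finset (Fin d)), Integrable (fun θ =>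
        (symb θ : ℂ) ^ k * torusChar (n - n' + Pi.single j 1) θ +
          (symb θ : ℂ) ^ k * torusChar (n - n' - Pi.single j 1) θ) (torus d) :=
      fun j _ => Integrable.add (hint _) (hint _)
    have hsum := integral_finsetSum Finset.univ hadd
    simp_rw [← integral_add (hint _) (hint _)]
    rw [← hsum, ← integral_const_mul]
    congr 1; ext θ
    simp only [← mul_add, torusChar_add_single]
    unfold symb
    rw [← Finset.mul_sum, ← Finset.sum_mul, ← Finset.mul_sum, pow_succ]
    push_cast
    ring

/-- The matrix elements of the propagator `e^{iτΔ}` factor over the coordinates: summing the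
exponential series of `pow_apply_single` under the integral gives the Fourier integral of
`e^{iτ ∑ cos θⱼ}`. -/
lemma exp_apply_single {d : ℕ} {L : latticeL2 d →L[ℂ] latticeL2 d}
    (hL : IsDiscreteLaplacian d L) (τ : ℝ) (n n' : Fin d → ℤ) :
    (NormedSpace.exp ((Complex.I * τ) • L)) (lp.single 2 n' (1 : ℂ)) n =
      ∏ j, kern τ (n j - n' j) := by
  set z : ℂ := Complex.I * τ with hz
  rw [show (∏ j, kern τ (n j - n' j)) = ∏ j, kern τ ((n - n') j) from rfl, ← integral_exp_symb]
  have h1 := NormedSpace.exp_series_hasSum_exp' (𝕂 := ℂ) (z • L)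
  have h2 := ((lp.evalCLM ℂ (fun _ : Fin d → ℤ => ℂ) 2 n).comp
    (ContinuousLinearMap.apply ℂ (latticeL2 d) (lp.single 2 n' (1 : ℂ)))).hasSum h1
  have h3 : HasSum (fun k : ℕ => ∫ θ, ((k.factorial : ℂ)⁻¹ * z ^ k) *
      ((symb θ : ℂ) ^ k * torusChar (n - n') θ) ∂(torus d))
      (∫ θ, Complex.exp (z * (symb θ : ℂ)) * torusChar (n - n') θ ∂(torus d)) := by
    refine hasSum_integral_of_dominated_convergence
      (fun k _ => ((‖z‖ * d) ^ k / k.factorial : ℝ)) ?_ ?_ ?_ ?_ ?_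
    · intro k
      exact ((continuous_symb_pow_mul k _).const_mul _).aestronglyMeasurable
    · intro k
      refine Filter.Eventually.of_forall fun θ => ?_
      rw [norm_mul]
      refine (mul_le_mul_of_nonneg_left (norm_symb_pow_mul_le k _ θ) (norm_nonneg _)).trans ?_
      rw [norm_mul, norm_inv, norm_pow, Complex.norm_natCast, mul_pow]
      apply le_of_eq; ring
    · exact Filter.Eventually.of_forall fun θ => Real.summable_pow_div_factorial _
    · exact integrable_const _
    · refine Filter.Eventually.of_forall fun θ => ?_
      have := (NormedSpace.exp_series_hasSum_exp' (𝕂 := ℂ) (z * (symb θ : ℂ))).mul_right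
        (torusChar (n - n') θ)
      rw [← Complex.exp_eq_exp_ℂ] at this
      convert! this using 2 with k
      rw [smul_eq_mul, mul_pow]; ring
  refine h2.unique ?_
  convert! h3 using 2 with k
  rw [integral_const_mul, ← pow_apply_single hL]
  simp only [smul_pow, map_smul, smul_eq_mul, mul_assoc]
  rfl

lemma memlp_translate {d : ℕ} (f : latticeL2 d) (v : Fin d → ℤ) :
    Memℓp (fun n => f (n + v)) 2 := by
  have := lp.memℓp f
  rw [memℓp_gen_iff (by norm_num)] at this ⊢
  exact ((Equiv.addRight v).summable_iff (f := fun i => ‖f i‖ ^ (2 : ENNReal).toReal)).2 this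

/-- Translation `f ↦ f (· + v)` on `ℓ²`. -/
def latticeShift {d : ℕ} (v : Fin d → ℤ) (f : latticeL2 d) : latticeL2 d :=
  ⟨fun n => f (n + v), memlp_translate f v⟩

lemma norm_translate {d : ℕ} (v : Fin d → ℤ) (f : latticeL2 d) : ‖latticeShift v f‖ = ‖f‖ := by
  have h : ‖latticeShift v f‖ ^ (2 : ENNReal).toReal = ‖f‖ ^ (2 : ENNReal).toReal := by
    rw [lp.norm_rpow_eq_tsum (by norm_num), lp.norm_rpow_eq_tsum (by norm_num)]
    exact (Equiv.addRight v).tsum_eq (fun i => ‖f i‖ ^ (2 : ENNReal).toReal)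
  have h2 : (2 : ENNReal).toReal ≠ 0 := by norm_num
  exact (Real.rpow_left_inj (norm_nonneg _) (norm_nonneg _) h2).1 h

lemma inner_translate {d : ℕ} (v : Fin d → ℤ) (f g : latticeL2 d) :
    inner ℂ (latticeShift v f) g = inner ℂ f (latticeShift (-v) g) := by
  rw [lp.inner_eq_tsum, lp.inner_eq_tsum,
    ← (Equiv.addRight v).tsum_eq (fun n => inner ℂ (f n) (latticeShift (-v) g n))]
  congr 1; ext n
  simp [latticeShift]

/-- The Laplacian as a sum of translations, from which its norm and its adjoint are read off. -/
lemma apply_eq_sum_translate {d : ℕ} {L : latticeL2 d →L[ℂ] latticeL2 d}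
    (hL : IsDiscreteLaplacian d L) (f : latticeL2 d) :
    L f = (1 / 2 : ℂ) • ∑ j, (latticeShift (Pi.single j 1) f + latticeShift (-Pi.single j 1) f) := by
  ext n
  rw [hL]
  rw [lp.coeFn_smul, Pi.smul_apply, lp.coeFn_sum, Finset.sum_apply, smul_eq_mul]
  simp [latticeShift, sub_eq_add_neg]
  rfl

lemma norm_laplacian_le {d : ℕ} {L : latticeL2 d →L[ℂ] latticeL2 d}
    (hL : IsDiscreteLaplacian d L) : ‖L‖ ≤ d := by
  refine L.opNorm_le_bound (by positivity) fun f => ?_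
  rw [apply_eq_sum_translate hL, norm_smul]
  have h : ‖∑ j, (latticeShift (Pi.single j 1) f + latticeShift (-Pi.single j 1) f)‖ ≤
      ∑ _j : Fin d, (‖f‖ + ‖f‖) :=
    (norm_sum_le _ _).trans (Finset.sum_le_sum fun j _ => (norm_add_le _ _).trans
      (by rw [norm_translate, norm_translate]))
  rw [Finset.sum_const, Finset.card_univ, Fintype.card_fin, nsmul_eq_mul] at h
  rw [show ‖(1 / 2 : ℂ)‖ = 1 / 2 by norm_num]
  linarith

lemma isSelfAdjoint_laplacian {d : ℕ} {L : latticeL2 d →L[ℂ] latticeL2 d}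
    (hL : IsDiscreteLaplacian d L) : IsSelfAdjoint L := by
  rw [ContinuousLinearMap.isSelfAdjoint_iff_isSymmetric]
  intro f g
  change inner ℂ (L f) g = inner ℂ f (L g)
  rw [apply_eq_sum_translate hL, apply_eq_sum_translate hL, inner_smul_left, inner_smul_right,
    sum_inner, inner_sum]
  simp only [inner_add_left, inner_add_right, inner_translate, neg_neg]
  rw [map_div₀, map_one, Complex.conj_ofNat]
  simp only [add_comm]

/-- The spectrum is real by self-adjointness, and in the disc of radius `‖L‖ ≤ d`. -/
lemma isUnit_sub_smul_one {d : ℕ} {L : latticeL2 d →L[ℂ] latticeL2 d}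
    (hL : IsDiscreteLaplacian d L) {l : ℂ} (hl : ¬ (l.im = 0 ∧ |l.re| ≤ d)) :
    IsUnit (L - l • (1 : latticeL2 d →L[ℂ] latticeL2 d)) := by
  by_contra h
  have hs : l ∈ spectrum ℂ L := by
    rw [spectrum.mem_iff, Algebra.algebraMap_eq_smul_one, ← neg_sub, IsUnit.neg_iff]
    exact h
  apply hl
  have h1 := (isSelfAdjoint_laplacian hL).mem_spectrum_eq_re hs
  have h2 : l.im = 0 := by rw [h1]; simp
  have : Nontrivial (latticeL2 d) :=
    ⟨lp.single 2 0 1, 0, fun h0 => by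
      have := congrArg (fun f : latticeL2 d => f 0) h0
      simp at this⟩
  have h3 := (spectrum.norm_le_norm_of_mem hs).trans (norm_laplacian_le hL)
  exact ⟨h2, (Complex.abs_re_le_norm l).trans h3⟩

/-! ### The resolvent bound -/

/-- Duhamel's formula `x = -iσ ∫₀^∞ e^{-iσtl} e^{iσtL} (L - l) x dt`, with the sign `σ` chosen so that
`e^{-iσtl}` decays, bounds a matrix element of the resolvent by the time integral of the propagator.
The formula is used in differential form, through the explicit antiderivative of the majorant. The
bound is `3 * 4 * 200000`: three kernels, whose majorants have integral at most `4`. -/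
lemma norm_apply_le_of_im_ne_zero {d : ℕ} (hd : 3 ≤ d) {L : latticeL2 d →L[ℂ] latticeL2 d}
    (hL : IsDiscreteLaplacian d L) {l : ℂ} (hl : l.im ≠ 0) (n n' : Fin d → ℤ)
    {x : latticeL2 d} (hx : L x = lp.single 2 n' (1 : ℂ) + l • x) :
    ‖x n‖ ≤ 2400000 := by
  obtain ⟨σ, hσ, hσl⟩ : ∃ σ : ℝ, (σ = 1 ∨ σ = -1) ∧ σ * l.im = -|l.im| := by
    rcases lt_or_gt_of_ne hl with h | h
    · exact ⟨1, Or.inl rfl, by rw [abs_of_neg h]; ring⟩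
    · exact ⟨-1, Or.inr rfl, by rw [abs_of_pos h]; ring⟩
  let _ : NormedAlgebra ℚ (latticeL2 d →L[ℂ] latticeL2 d) := NormedAlgebra.restrictScalars ℚ ℂ _
  set A : latticeL2 d →L[ℂ] latticeL2 d := (Complex.I * σ) • L with hA
  set δ : latticeL2 d := lp.single 2 n' (1 : ℂ) with hδ
  set Φ : (latticeL2 d →L[ℂ] latticeL2 d) →L[ℂ] ℂ :=
    (lp.evalCLM ℂ (fun _ : Fin d → ℤ => ℂ) 2 n).comp
      (ContinuousLinearMap.apply ℂ (latticeL2 d) x) with hΦ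
  have hΦa : ∀ T : latticeL2 d →L[ℂ] latticeL2 d, Φ T = T x n := fun T => rfl
  have hsm : ∀ t : ℝ, (t : ℂ) • A = (Complex.I * ((σ * t : ℝ) : ℂ)) • L := fun t => by
    rw [hA, smul_smul]; congr 1; push_cast; ring
  set F : ℝ → ℂ := fun t =>
    Complex.exp (-(Complex.I * σ * l) * t) * Φ (NormedSpace.exp ((t : ℂ) • A)) with hF
  set F' : ℝ → ℂ := fun t => Complex.I * σ * Complex.exp (-(Complex.I * σ * l) * t) *
    (NormedSpace.exp ((t : ℂ) • A)) δ n with hF'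
  -- Since `L x = δ + l x`, the term `l x` is cancelled by the derivative of the scalar factor.
  have hFd : ∀ t, HasDerivAt F (F' t) t := by
    intro t
    have h1 : HasDerivAt (fun u : ℂ => Φ (NormedSpace.exp (u • A)))
        (Φ (NormedSpace.exp ((t : ℂ) • A) * A)) (t : ℂ) :=
      Φ.hasFDerivAt.comp_hasDerivAt (t : ℂ) (hasDerivAt_exp_smul_const A (t : ℂ))
    have h2 := (((hasDerivAt_id (t : ℂ)).const_mul (-(Complex.I * σ * l))).cexp.mul h1).comp_ofReal
    convert! h2 using 1
    have e1 : Φ (NormedSpace.exp ((t : ℂ) • A) * A) = (Complex.I * σ) *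
        ((NormedSpace.exp ((t : ℂ) • A)) δ n + l * Φ (NormedSpace.exp ((t : ℂ) • A))) := by
      rw [hΦa, hΦa, mul_apply_eq_comp]
      have : A x = (Complex.I * σ) • (δ + l • x) := by rw [hA, ← hx]; rfl
      rw [this, map_smul, map_add, map_smul]
      rfl
    rw [e1]
    simp only [id, hF']
    ring
  have hexp : ∀ t : ℝ, ‖Complex.exp (-(Complex.I * σ * l) * t)‖ = Real.exp (-(|l.im| * t)) := by
    intro t
    rw [Complex.norm_exp]
    congr 1
    simp
    rw [hσl]; ring
  have hF'n : ∀ t, 0 ≤ t → ‖F' t‖ ≤ 200000 * (majorant ((n ⟨0, by omega⟩ - n' ⟨0, by omega⟩ : ℤ)) t +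
      majorant ((n ⟨1, by omega⟩ - n' ⟨1, by omega⟩ : ℤ)) t +
      majorant ((n ⟨2, by omega⟩ - n' ⟨2, by omega⟩ : ℤ)) t) := by
    intro t ht
    have h1 : σ * t = t ∨ σ * t = -t := by
      rcases hσ with rfl | rfl
      · left; ring
      · right; ring
    have h2 := prod_norm_kern_le hd ht h1 (fun j => n j - n' j)
    refine le_trans ?_ h2
    have h3 : ‖(σ : ℂ)‖ = 1 := by rcases hσ with rfl | rfl <;> simp
    simp only [hF']
    rw [hsm, hδ, exp_apply_single hL, norm_mul, norm_mul, norm_mul, h3, hexp, Complex.norm_I,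
      norm_prod, one_mul, one_mul]
    refine mul_le_of_le_one_left (Finset.prod_nonneg fun _ _ => norm_nonneg _) ?_
    rw [Real.exp_le_one_iff]
    have := mul_nonneg (abs_nonneg l.im) ht
    linarith
  have hmain : ∀ T : ℝ, 0 ≤ T → ‖F 0‖ ≤ Real.exp (-(|l.im| * T)) * ‖x‖ + 2400000 := by
    intro T hT
    set P : ℝ → ℝ := fun t => 200000 * (majorantPrim ((n ⟨0, by omega⟩ - n' ⟨0, by omega⟩ : ℤ)) t +
      majorantPrim ((n ⟨1, by omega⟩ - n' ⟨1, by omega⟩ : ℤ)) t +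
      majorantPrim ((n ⟨2, by omega⟩ - n' ⟨2, by omega⟩ : ℤ)) t) with hP
    have hPd : ∀ t, 0 ≤ t → HasDerivAt P _ t := fun t ht =>
      (((hasDerivAt_majorantPrim _ ht).add (hasDerivAt_majorantPrim _ ht)).add
        (hasDerivAt_majorantPrim _ ht)).const_mul 200000
    have key := image_norm_le_of_norm_deriv_right_le_deriv_boundary' (a := 0) (b := T)
      (f := fun t => F t - F 0) (f' := F') (B := fun t => P t - P 0)
      (fun t _ => ((hFd t).sub_const (F 0)).continuousAt.continuousWithinAt)
      (fun t _ => ((hFd t).sub_const (F 0)).hasDerivWithinAt)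
      (by simp)
      (fun t ht => ((hPd t ht.1).sub_const (P 0)).continuousAt.continuousWithinAt)
      (fun t ht => ((hPd t ht.1).sub_const (P 0)).hasDerivWithinAt)
      (fun t ht => hF'n t ht.1)
      (Set.right_mem_Icc.2 hT)
    have hPT : P T - P 0 ≤ 2400000 := by
      simp only [hP]
      linarith [majorantPrim_sub_le ((n ⟨0, by omega⟩ - n' ⟨0, by omega⟩ : ℤ) : ℝ) T,
        majorantPrim_sub_le ((n ⟨1, by omega⟩ - n' ⟨1, by omega⟩ : ℤ) : ℝ) T,
        majorantPrim_sub_le ((n ⟨2, by omega⟩ - n' ⟨2, by omega⟩ : ℤ) : ℝ) T]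
    -- `e^{iσTL}` is unitary, so only the scalar factor matters at time `T`.
    have hFT : ‖F T‖ ≤ Real.exp (-(|l.im| * T)) * ‖x‖ := by
      simp only [hF]
      rw [norm_mul, hexp, hΦa]
      gcongr
      refine (lp.norm_apply_le_norm two_ne_zero _ n).trans (le_of_eq ?_)
      refine ContinuousLinearMap.norm_map_of_mem_unitary ?_ x
      apply NormedSpace.exp_mem_unitary_of_mem_skewAdjoint
      rw [hsm, mul_smul]
      refine IsSelfAdjoint.smul_mem_skewAdjoint Complex.conj_I ?_
      exact IsSelfAdjoint.smul (Complex.conj_ofReal _) (isSelfAdjoint_laplacian hL)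
    have := norm_sub_norm_le (F 0) (F T)
    rw [norm_sub_rev] at this
    linarith
  have hF0 : F 0 = x n := by
    simp only [hF, hΦa, Complex.ofReal_zero, mul_zero, Complex.exp_zero, one_mul, zero_smul,
      NormedSpace.exp_zero, one_apply_eq_self]
  rw [← hF0]
  have hlim : Filter.Tendsto (fun T : ℝ => Real.exp (-(|l.im| * T)) * ‖x‖ + 2400000) Filter.atTop
      (nhds (0 * ‖x‖ + 2400000)) := by
    refine Filter.Tendsto.add_const _ (Filter.Tendsto.mul_const _ ?_)
    refine Real.tendsto_exp_neg_atTop_nhds_zero.comp ?_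
    exact Filter.tendsto_id.const_mul_atTop (abs_pos.2 hl)
  rw [zero_mul, zero_add] at hlim
  exact ge_of_tendsto hlim ((Filter.eventually_ge_atTop 0).mono hmain)

lemma norm_resolvent_le_of_im_ne_zero {d : ℕ} (hd : 3 ≤ d) {L : latticeL2 d →L[ℂ] latticeL2 d}
    (hL : IsDiscreteLaplacian d L) {l : ℂ} (hl : l.im ≠ 0) (n n' : Fin d → ℤ) :
    ‖(Ring.inverse (L - l • 1)) (lp.single 2 n' (1 : ℂ)) n‖ ≤ 2400000 := by
  have hu := isUnit_sub_smul_one hL (l := l) (fun h => hl h.1)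
  refine norm_apply_le_of_im_ne_zero hd hL hl n n' ?_
  have h := Ring.mul_inverse_cancel _ hu
  set y := (Ring.inverse (L - l • 1)) (lp.single 2 n' (1 : ℂ)) with hy
  have h1 : L y - l • y = lp.single 2 n' (1 : ℂ) :=
    congrArg (fun T : latticeL2 d →L[ℂ] latticeL2 d => T (lp.single 2 n' (1 : ℂ))) h
  exact sub_eq_iff_eq_add.1 h1

/-- A bound on the resolvent at all points `l + iε` with `ε > 0`, tested against a continuous linear
functional, passes to `l` if `l` is in the resolvent set, because inversion is continuous. -/
lemma norm_map_inverse_le_of_isUnit {R : Type*} [NormedRing R] [NormedAlgebra ℂ R]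
    [CompleteSpace R] (φ : R →L[ℂ] ℂ) {a : R} {l : ℂ} (hu : IsUnit (a - l • (1 : R))) {C : ℝ}
    (h : ∀ ε : ℝ, 0 < ε → ‖φ (Ring.inverse (a - (l + Complex.I * ε) • (1 : R)))‖ ≤ C) :
    ‖φ (Ring.inverse (a - l • (1 : R)))‖ ≤ C := by
  obtain ⟨u, hu⟩ := hu
  have h1 : Filter.Tendsto (fun ε : ℝ => a - (l + Complex.I * ε) • (1 : R)) (nhds 0)
      (nhds (u : R)) := by
    have : Continuous fun ε : ℝ => a - (l + Complex.I * ε) • (1 : R) := by fun_prop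
    simpa [hu] using this.tendsto 0
  have h2 := (φ.continuous.norm.tendsto _).comp ((NormedRing.inverse_continuousAt u).tendsto.comp h1)
  rw [hu] at h2
  refine le_of_tendsto (h2.mono_left (nhdsWithin_le_nhds (s := Set.Ioi 0))) ?_
  filter_upwards [self_mem_nhdsWithin] with ε hε
  exact h ε hε

/-- For `d ≥ 3` there is `C = C(d) > 0` such that for every
`λ ∈ ℂ \ [-d,d]` the operator `Δ - λI` is boundedly invertible on `ℓ²(ℤᵈ)` and all its
matrix elements are bounded by `C`. -/
theorem statement7 (d : ℕ) (hd : 3 ≤ d)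
    (L : lp (fun _ : Fin d → ℤ => ℂ) 2 →L[ℂ] lp (fun _ : Fin d → ℤ => ℂ) 2)
    (hL : IsDiscreteLaplacian d L) :
    ∃ C : ℝ, 0 < C ∧ ∀ l : ℂ, ¬ (l.im = 0 ∧ |l.re| ≤ d) →
      IsUnit (L - l • (1 : lp (fun _ : Fin d → ℤ => ℂ) 2 →L[ℂ] lp (fun _ : Fin d → ℤ => ℂ) 2)) ∧
      ∀ n n' : Fin d → ℤ,
        ‖(Ring.inverse (L - l • 1)) (lp.single 2 n' (1:ℂ)) n‖ ≤ C := by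
  refine ⟨2400000, by norm_num, fun l hl => ⟨isUnit_sub_smul_one hL hl, fun n n' => ?_⟩⟩
  by_cases him : l.im ≠ 0
  · exact norm_resolvent_le_of_im_ne_zero hd hL him n n'
  -- A real `l` outside `[-d, d]` is reached as the limit of `l + iε`.
  push Not at him
  refine norm_map_inverse_le_of_isUnit ((lp.evalCLM ℂ (fun _ : Fin d → ℤ => ℂ) 2 n).comp
    (ContinuousLinearMap.apply ℂ (latticeL2 d) (lp.single 2 n' (1 : ℂ))))
    (isUnit_sub_smul_one hL hl) fun ε hε => ?_
  refine norm_resolvent_le_of_im_ne_zero hd hL ?_ n n'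
  simp [him, hε.ne']
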